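/- Let m ≥ 1, n ≥ 1 be integers and μ ∈ ℝ, and set T̂_{m,n}^{(μ)}(z) = T_{m,n}^{(μ)}(−z). Then the rational function ŵ_{m,n}(z; μ) = T̂_{m−1,n}^{(μ)}(z) · T̂_{m−1,n+1}^{(μ)}(z) / (T̂_{m,n}^{(μ)}(z) · T̂_{m−2,n+1}^{(μ)}(z)) is a solution of P_V with parameters α = m²/2, β = −(m+2n+1+μ)²/2, γ = −μ; moreover ŵ_{m,n}(z; μ) = w_{m,n}(−z; μ) where w_{m,n}(z; μ) = T_{m−1,n}^{(μ)}(z) T_{m−1,n+1}^{(μ)}(z)/(T_{m,n}^{(μ)}(z) T_{m−2,n+1}^{(μ)}(z)). -/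

import Mathlib

noncomputable section

open Finset

/-- Generalized binomial coefficient `C(x, k)` for real `x`. -/
def genBinom (x : ℝ) (k : ℕ) : ℝ :=
  (∏ i ∈ Finset.range k, (x - i)) / (Nat.factorial k)

/-- Associated Laguerre polynomial `L_n^{(α)}(z)`, with the convention `L_n^{(α)} = 0` for `n < 0`. -/
def lagL (n : ℤ) (α : ℝ) : ℝ → ℝ := fun z =>
  if n < 0 then 0
  else ∑ k ∈ Finset.range (n.toNat + 1),
    (-1 : ℝ) ^ k * genBinom ((n : ℝ) + α) (n.toNat - k) * z ^ k / (Nat.factorial k)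

/-- Generalised Laguerre polynomial
`T_{m,n}^{(μ)}(z) = det[(d/dz)^{j+k} L_{m+n}^{(μ+1)}(z)]_{j,k=0}^{n-1}`
(with `T_{m,0}^{(μ)} = 1`, the empty determinant). -/
def genLag (m : ℤ) (n : ℕ) (μ : ℝ) : ℝ → ℝ := fun z =>
  Matrix.det (Matrix.of fun j k : Fin n =>
    iteratedDeriv ((j : ℕ) + (k : ℕ)) (lagL (m + n) (μ + 1)) z)

/-- Wronskian `Wr(f_1, …, f_r)(z) = det[(d/dz)^{j-1} f_k(z)]`. -/
def wronskian {r : ℕ} (f : Fin r → ℝ → ℝ) : ℝ → ℝ := fun z =>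
  Matrix.det (Matrix.of fun j k : Fin r => iteratedDeriv (j : ℕ) (f k) z)

/-- The constant `c_{m,n} = (-1)^{n(2m+1+n)/2} ∏_{j=1}^n (j-1)!/(m+j)!`. -/
def cmn (m n : ℕ) : ℝ :=
  (-1 : ℝ) ^ (n * (2 * m + 1 + n) / 2) *
    ∏ j ∈ Finset.range n, (Nat.factorial j : ℝ) / (Nat.factorial (m + j + 1))

/-- `τ_{m,n}^{(μ)}(z) = det[(z d/dz)^{j+k} L_{m+n}^{(n+μ)}(z)]_{j,k=0}^{n-1}`. -/
def tauP (m : ℤ) (n : ℕ) (μ : ℝ) : ℝ → ℝ := fun z =>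
  Matrix.det (Matrix.of fun j k : Fin n =>
    ((fun (g : ℝ → ℝ) => fun t => t * deriv g t)^[(j : ℕ) + (k : ℕ)]
      (lagL (m + n) ((n : ℝ) + μ))) z)

/-- Hirota bilinear operator `D_z(f • g) = f' g - f g'`. -/
def hirota (f g : ℝ → ℝ) (z : ℝ) : ℝ := deriv f z * g z - f z * deriv g z

/-- Probabilists' Hermite polynomial `He_n` as a real function. -/
def He (n : ℕ) : ℝ → ℝ := fun z => Polynomial.aeval z (Polynomial.hermite n)

/-- The fifth Painlevé equation (with `δ = -1/2`) for `w` with parameters `(a, b, c)`,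
holding at the point `z`. -/
def PV (a b c : ℝ) (w : ℝ → ℝ) (z : ℝ) : Prop :=
  iteratedDeriv 2 w z =
    (1 / (2 * w z) + 1 / (w z - 1)) * (deriv w z) ^ 2
      - (1 / z) * deriv w z
      + (w z - 1) ^ 2 * (a * (w z) ^ 2 + b) / (z ^ 2 * w z)
      + c * w z / z
      - w z * (w z + 1) / (2 * (w z - 1))

/-- The Jimbo–Miwa–Okamoto `σ`-equation `S_V` with parameters `(ν₁, ν₂, ν₃)`,
holding at the point `z`. -/
def SV (ν₁ ν₂ ν₃ : ℝ) (σ : ℝ → ℝ) (z : ℝ) : Prop :=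
  (z * iteratedDeriv 2 σ z) ^ 2 =
    (2 * (deriv σ z) ^ 2 + (ν₁ + ν₂ + ν₃ - z) * deriv σ z + σ z) ^ 2
      - 4 * deriv σ z * (deriv σ z + ν₁) * (deriv σ z + ν₂) * (deriv σ z + ν₃)

/-!
For the derivation `z d/dz`, the fifth Painlevé equation is the symmetric system of affine type
`A₃⁽¹⁾` in `f₀, f₁, f₂, f₃`, with `w = -f₀ / f₂`. A Bäcklund translation of this system, the square
of a half step made of two reflections and a rotation, shifts `(α₀, α₁, α₂, α₃)` by
`(-1, 1, -1, 1)`. If `w = P / Q`, where the logarithmic derivatives of `P` and `Q` are suitable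
functions of the `fᵢ` and `αᵢ`, then the translation moves `P` and `Q` one step along two Toda
chains, as ratios of consecutive tau functions.

By the Desnanot–Jacobi identity, the Hankel determinants `det (p^(i+j))` of the derivatives of a
polynomial form a Toda chain. The contiguous relations between `L_N` and `L_{N-1}` say that
`w = L_N / L_{N-1}` is a (Riccati) solution to start from, and after `n` translations it has become
`w_{m,n}`, with `N = m + n`. Degree counts show that no denominator vanishes on the way.
-/

section DesnanotJacobi
open Polynomial
variable {R m : Type*} [CommRing R] [Fintype m] [DecidableEq m]

/-- The minor of `M` on the rows and columns of its upper left block and on row `i` and column `j`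
of its lower right block. -/
def borderedMinor (M : Matrix (m ⊕ Fin 2) (m ⊕ Fin 2) R) (i j : Fin 2) : R :=
  (M.submatrix (Sum.map id fun _ : Fin 1 => i) (Sum.map id fun _ : Fin 1 => j)).det

lemma map_borderedMinor {S : Type*} [CommRing S] (φ : R →+* S)
    (M : Matrix (m ⊕ Fin 2) (m ⊕ Fin 2) R) (i j : Fin 2) :
    φ (borderedMinor M i j) = borderedMinor (M.map φ) i j :=
  RingHom.map_det φ _

lemma borderedMinor_fromBlocks_of_invertible (A : Matrix m m R) [Invertible A]
    (B : Matrix m (Fin 2) R) (C : Matrix (Fin 2) m R) (D : Matrix (Fin 2) (Fin 2) R)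
    (i j : Fin 2) :
    borderedMinor (Matrix.fromBlocks A B C D) i j = A.det * (D - C * ⅟A * B) i j := by
  have hblocks : (Matrix.fromBlocks A B C D).submatrix (Sum.map id fun _ : Fin 1 => i)
      (Sum.map id fun _ : Fin 1 => j) = Matrix.fromBlocks A (B.submatrix id fun _ => j)
        (C.submatrix (fun _ => i) id) (D.submatrix (fun _ => i) fun _ => j) := by
    ext (x | x) (y | y) <;> rfl
  rw [borderedMinor, hblocks, Matrix.det_fromBlocks₁₁, Matrix.det_fin_one]
  rfl

lemma desnanotJacobi_of_isUnit (M : Matrix (m ⊕ Fin 2) (m ⊕ Fin 2) R)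
    (hM : IsUnit M.toBlocks₁₁.det) :
    M.det * M.toBlocks₁₁.det =
      borderedMinor M 0 0 * borderedMinor M 1 1 - borderedMinor M 0 1 * borderedMinor M 1 0 := by
  have := M.toBlocks₁₁.invertibleOfIsUnitDet hM
  conv_lhs => rw [← M.fromBlocks_toBlocks]
  conv_rhs => rw [← M.fromBlocks_toBlocks]
  simp only [borderedMinor_fromBlocks_of_invertible, Matrix.det_fromBlocks₁₁,
    Matrix.toBlocks_fromBlocks₁₁, Matrix.det_fin_two]
  ring

theorem desnanotJacobi_of_mem_nonZeroDivisors (M : Matrix (m ⊕ Fin 2) (m ⊕ Fin 2) R)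
    (hM : M.toBlocks₁₁.det ∈ nonZeroDivisors R) :
    M.det * M.toBlocks₁₁.det =
      borderedMinor M 0 0 * borderedMinor M 1 1 - borderedMinor M 0 1 * borderedMinor M 1 0 := by
  set φ := algebraMap R (Localization (nonZeroDivisors R))
  have hunit : IsUnit (M.map φ).toBlocks₁₁.det := by
    have h := IsLocalization.map_units (Localization (nonZeroDivisors R)) ⟨_, hM⟩
    rwa [RingHom.map_det] at h
  apply IsLocalization.injective (Localization (nonZeroDivisors R)) le_rfl
  simp only [map_mul, map_sub, map_borderedMinor, RingHom.map_det]
  exact desnanotJacobi_of_isUnit (M.map φ) hunit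

/-- Deforming the corner `A` to `X + A` makes its determinant regular. -/
theorem desnanotJacobi (M : Matrix (m ⊕ Fin 2) (m ⊕ Fin 2) R) :
    M.det * M.toBlocks₁₁.det =
      borderedMinor M 0 0 * borderedMinor M 1 1 - borderedMinor M 0 1 * borderedMinor M 1 0 := by
  let N : Matrix (m ⊕ Fin 2) (m ⊕ Fin 2) R[X] := Matrix.fromBlocks (-M.toBlocks₁₁).charmatrix
    (M.toBlocks₁₂.map C) (M.toBlocks₂₁.map C) (M.toBlocks₂₂.map C)
  have hN : N.map (evalRingHom 0) = M := by
    ext (i | i) (j | j) <;>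
    simp [N, Matrix.toBlocks₁₁, Matrix.toBlocks₁₂, Matrix.toBlocks₂₁, Matrix.toBlocks₂₂,
      Matrix.charmatrix_apply, Matrix.diagonal_apply, apply_ite]
  have hregular : N.toBlocks₁₁.det ∈ nonZeroDivisors R[X] :=
    (Matrix.charpoly_monic (-M.toBlocks₁₁)).mem_nonZeroDivisors
  have hcorner : N.toBlocks₁₁.map (evalRingHom 0) = M.toBlocks₁₁ :=
    congrArg Matrix.toBlocks₁₁ hN
  have h := congrArg (evalRingHom 0) (desnanotJacobi_of_mem_nonZeroDivisors N hregular)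
  simpa only [map_mul, map_sub, map_borderedMinor, RingHom.map_det, RingHom.mapMatrix_apply, hN,
    hcorner] using h
end DesnanotJacobi

section Hankel
variable {k R ι : Type*} [CommSemiring k] [CommRing R] [Algebra k R] [DecidableEq ι]

lemma derivation_prod (D : Derivation k R R) (s : Finset ι) (a : ι → R) :
    D (∏ i ∈ s, a i) = ∑ j ∈ s, ∏ i ∈ s, Function.update a j (D (a j)) i := by
  induction s using Finset.induction_on with
  | empty => simp
  | insert i s hi ih =>
    rw [prod_insert hi, D.leibniz, ih, sum_insert hi, prod_insert hi, Function.update_self,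
      prod_update_of_notMem hi, smul_sum, add_comm, smul_eq_mul, mul_comm (∏ _ ∈ _, _)]
    congr 1
    refine sum_congr rfl fun j hj => ?_
    rw [prod_insert hi, Function.update_of_ne (by rintro rfl; exact hi hj), smul_eq_mul]

variable [Fintype ι]

lemma derivation_det (D : Derivation k R R) (M : Matrix ι ι R) :
    D M.det = ∑ j, (M.updateCol j fun i => D (M i j)).det := by
  simp only [Matrix.det_apply, map_sum, Units.smul_def, map_zsmul, derivation_prod]
  rw [sum_comm]
  simp only [smul_sum]
  refine sum_congr rfl fun j _ => sum_congr rfl fun σ _ => ?_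
  congr 1
  refine prod_congr rfl fun i _ => ?_
  rw [Matrix.updateCol_apply, Function.update_apply]
  split_ifs with h
  · rw [h]
  · rfl

/-- The minor of the infinite Hankel matrix `(D^(i+j) f)` with rows `r` and columns `c`. -/
def hankelMinor (D : Derivation k R R) (f : R) (r c : ι → ℕ) : R :=
  (Matrix.of fun i j => D^[r i + c j] f).det

lemma hankelMinor_comm (D : Derivation k R R) (f : R) (r c : ι → ℕ) :
    hankelMinor D f r c = hankelMinor D f c r := by
  rw [hankelMinor, ← Matrix.det_transpose]
  simp only [hankelMinor, add_comm]
  rfl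

lemma hankelMinor_comp_equiv {κ : Type*} [Fintype κ] [DecidableEq κ] (D : Derivation k R R) (f : R)
    (r c : ι → ℕ) (e : κ ≃ ι) : hankelMinor D f (r ∘ e) (c ∘ e) = hankelMinor D f r c :=
  Matrix.det_submatrix_equiv_self e (Matrix.of fun i j => D^[r i + c j] f)

lemma hankelMinor_eq_zero_of_eq (D : Derivation k R R) (f : R) (r c : ι → ℕ) {i j : ι}
    (hij : i ≠ j) (hc : c i = c j) : hankelMinor D f r c = 0 :=
  Matrix.det_zero_of_column_eq hij fun l => by simp only [Matrix.of_apply, hc]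

lemma derivation_hankelMinor (D : Derivation k R R) (f : R) (r c : ι → ℕ) :
    D (hankelMinor D f r c) = ∑ j, hankelMinor D f r (Function.update c j (c j + 1)) := by
  rw [hankelMinor, derivation_det]
  refine sum_congr rfl fun j _ => congrArg Matrix.det ?_
  ext i l
  rw [Matrix.updateCol_apply]
  obtain rfl | hl := eq_or_ne l j
  · simp [← Function.iterate_succ_apply', add_assoc]
  · simp [hl]

/-- The indices `0, …, n - 1, l`. -/
def lastReplaced (n l : ℕ) : Fin (n + 1) → ℕ :=
  Function.update Fin.val (Fin.last n) l

lemma lastReplaced_self (n : ℕ) : lastReplaced n n = Fin.val :=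
  Function.update_eq_self _ _

lemma derivation_hankelMinor_val (D : Derivation k R R) (f : R) {n : ℕ} (r : Fin (n + 1) → ℕ) :
    D (hankelMinor D f r Fin.val) = hankelMinor D f r (lastReplaced n (n + 1)) := by
  rw [derivation_hankelMinor]
  refine Fintype.sum_eq_single (Fin.last n) fun j hj => ?_
  obtain ⟨j, rfl⟩ := Fin.exists_castSucc_eq.mpr hj
  refine hankelMinor_eq_zero_of_eq D f r _ j.castSucc_lt_succ.ne ?_
  rw [Function.update_self, Function.update_of_ne j.castSucc_lt_succ.ne', Fin.val_succ,
    Fin.val_castSucc]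

/-- The Hankel determinant `det (D^(i+j) f)` of size `n`, a tau function of the Toda chain. -/
def hankelDet (D : Derivation k R R) (f : R) (n : ℕ) : R :=
  hankelMinor D f (Fin.val : Fin n → ℕ) Fin.val

@[simp] lemma hankelDet_zero (D : Derivation k R R) (f : R) : hankelDet D f 0 = 1 :=
  Matrix.det_isEmpty

@[simp] lemma hankelDet_one (D : Derivation k R R) (f : R) : hankelDet D f 1 = f :=
  Matrix.det_fin_one _

lemma borderedMinor_hankel (D : Derivation k R R) (f : R) (n : ℕ) (i j : Fin 2) :
    borderedMinor (Matrix.of fun a b : Fin n ⊕ Fin 2 =>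
      D^[(finSumFinEquiv a : ℕ) + finSumFinEquiv b] f) i j =
      hankelMinor D f (lastReplaced n (n + i)) (lastReplaced n (n + j)) := by
  have hindex (l : Fin 2) (x : Fin n ⊕ Fin 1) :
      (finSumFinEquiv (Sum.map id (fun _ : Fin 1 => l) x) : ℕ) =
        lastReplaced n (n + l) (finSumFinEquiv x) := by
    rcases x with x | x
    · rw [Sum.map_inl, finSumFinEquiv_apply_left, finSumFinEquiv_apply_left]
      exact (Function.update_of_ne (Fin.castSucc_lt_last x).ne _ Fin.val).symm
    · rw [Sum.map_inr, Subsingleton.elim x 0, finSumFinEquiv_apply_right,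
        finSumFinEquiv_apply_right]
      exact (Function.update_self (Fin.last n) _ Fin.val).symm
  rw [← hankelMinor_comp_equiv D f _ _ (finSumFinEquiv (m := n) (n := 1))]
  refine congrArg Matrix.det (Matrix.ext fun a b => ?_)
  simp only [Matrix.submatrix_apply, Matrix.of_apply, hindex, Function.comp_apply]

theorem hankelDet_toda (D : Derivation k R R) (f : R) (n : ℕ) :
    hankelDet D f (n + 2) * hankelDet D f n =
      hankelDet D f (n + 1) * D (D (hankelDet D f (n + 1))) - D (hankelDet D f (n + 1)) ^ 2 := by
  have hfirst : D (hankelDet D f (n + 1)) = hankelMinor D f Fin.val (lastReplaced n (n + 1)) :=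
    derivation_hankelMinor_val D f _
  have hsecond : D (D (hankelDet D f (n + 1))) =
      hankelMinor D f (lastReplaced n (n + 1)) (lastReplaced n (n + 1)) := by
    rw [hfirst, hankelMinor_comm, derivation_hankelMinor_val]
  let M := Matrix.of fun a b : Fin n ⊕ Fin 2 => D^[(finSumFinEquiv a : ℕ) + finSumFinEquiv b] f
  have hM : M.det = hankelDet D f (n + 2) :=
    hankelMinor_comp_equiv D f _ _ (finSumFinEquiv (m := n) (n := 2))
  have hjacobi := desnanotJacobi M
  simp only [hM, M, borderedMinor_hankel, Fin.val_zero, Fin.val_one, add_zero,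
    lastReplaced_self] at hjacobi
  rw [hsecond, sq, hfirst]
  nth_rw 3 [hankelMinor_comm]
  exact hjacobi
end Hankel

section Degrees
open Polynomial
variable {R : Type*} [CommRing R]

lemma coeff_X_mul_derivative (q : R[X]) (i : ℕ) :
    (X * derivative q).coeff i = i * q.coeff i := by
  cases i with
  | zero => simp
  | succ i => rw [coeff_X_mul, coeff_derivative, mul_comm, Nat.cast_succ]

lemma natDegree_X_mul_derivative_le (q : R[X]) : (X * derivative q).natDegree ≤ q.natDegree := by
  rw [natDegree_le_iff_coeff_eq_zero]
  intro i hi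
  rw [coeff_X_mul_derivative, coeff_eq_zero_of_natDegree_lt hi, mul_zero]

/-- The right-hand side `q q'' - q' ^ 2` of the Toda equation. -/
def todaForm (q : R[X]) : R[X] :=
  q * derivative (derivative q) - derivative q ^ 2

lemma X_mul_todaForm (q : R[X]) :
    X * todaForm q = q * (X * derivative (derivative q)) - X * derivative q * derivative q := by
  rw [todaForm]; ring

lemma natDegree_todaForm_le {q : R[X]} {d : ℕ} (hq : q.natDegree ≤ d + 1) :
    (todaForm q).natDegree ≤ 2 * d := by
  nontriviality R
  have hderiv : (derivative q).natDegree ≤ d := (natDegree_derivative_le q).trans (by omega)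
  have hX := (natDegree_X_mul_derivative_le q).trans hq
  have hX' := (natDegree_X_mul_derivative_le (derivative q)).trans hderiv
  have h : (X * todaForm q).natDegree ≤ d + 1 + d := by
    rw [X_mul_todaForm]
    exact (natDegree_sub_le_of_le (natDegree_mul_le_of_le hq hX')
      (natDegree_mul_le_of_le hX hderiv)).trans (max_self _).le
  obtain h0 | h0 := eq_or_ne (todaForm q) 0
  · simp [h0]
  · rw [natDegree_X_mul h0] at h
    omega

lemma coeff_todaForm {q : R[X]} {d : ℕ} (hq : q.natDegree ≤ d + 1) :
    (todaForm q).coeff (2 * d) = -((d + 1) * q.coeff (d + 1) ^ 2) := by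
  have hderiv : (derivative q).natDegree ≤ d := (natDegree_derivative_le q).trans (by omega)
  have hX := (natDegree_X_mul_derivative_le q).trans hq
  have hX' := (natDegree_X_mul_derivative_le (derivative q)).trans hderiv
  rw [← coeff_X_mul, X_mul_todaForm, show 2 * d + 1 = d + 1 + d by ring, coeff_sub,
    coeff_mul_add_eq_of_natDegree_le hq hX', coeff_mul_add_eq_of_natDegree_le hX hderiv,
    coeff_X_mul_derivative, coeff_X_mul_derivative, coeff_derivative, Nat.cast_succ]
  ring

/-- The Hankel determinant `det (p^(i+j))` of the derivatives of a polynomial. -/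
def hankelPoly (p : R[X]) (n : ℕ) : R[X] :=
  hankelDet derivative' p n

lemma hankelPoly_toda (p : R[X]) (n : ℕ) :
    hankelPoly p (n + 2) * hankelPoly p n = todaForm (hankelPoly p (n + 1)) := by
  rw [hankelPoly, hankelPoly, hankelDet_toda]
  rfl

variable [IsDomain R] [CharZero R]

lemma coeff_todaForm_ne_zero {q : R[X]} {d : ℕ} (hq : q.natDegree = d + 1) :
    (todaForm q).coeff (2 * d) ≠ 0 := by
  have hlead : q.coeff (d + 1) ≠ 0 := by
    rw [← hq, coeff_natDegree, leadingCoeff_ne_zero]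
    exact ne_zero_of_natDegree_gt (n := d) (by omega)
  rw [coeff_todaForm hq.le, neg_ne_zero]
  exact mul_ne_zero (Nat.cast_add_one_ne_zero d) (pow_ne_zero 2 hlead)

lemma natDegree_todaForm {q : R[X]} {d : ℕ} (hq : q.natDegree = d + 1) :
    (todaForm q).natDegree = 2 * d :=
  natDegree_eq_of_le_of_coeff_ne_zero (natDegree_todaForm_le hq.le) (coeff_todaForm_ne_zero hq)

lemma hankelPoly_ne_zero_and_natDegree {p : R[X]} (hp : p ≠ 0) (n : ℕ) (hn : n ≤ p.natDegree + 1) :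
    hankelPoly p n ≠ 0 ∧ (hankelPoly p n).natDegree + n * n = n * (p.natDegree + 1) := by
  induction n using Nat.twoStepInduction with
  | zero => simp [hankelPoly]
  | one => simpa [hankelPoly, add_comm] using hp
  | more n ih₀ ih₁ =>
    obtain ⟨hne₀, hdeg₀⟩ := ih₀ (by omega)
    have hdeg₁ := (ih₁ (by omega)).2
    obtain ⟨d, hd⟩ : ∃ d, (hankelPoly p (n + 1)).natDegree = d + 1 :=
      Nat.exists_eq_succ_of_ne_zero (by rintro h; nlinarith)
    have hprod : hankelPoly p (n + 2) * hankelPoly p n ≠ 0 := by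
      rw [hankelPoly_toda]
      rintro h
      exact coeff_todaForm_ne_zero hd (by rw [h, coeff_zero])
    have hne₂ := left_ne_zero_of_mul hprod
    have hdeg := natDegree_todaForm hd
    rw [← hankelPoly_toda, natDegree_mul hne₂ hne₀] at hdeg
    exact ⟨hne₂, by nlinarith⟩

lemma hankelPoly_ne_zero {p : R[X]} (hp : p ≠ 0) {n : ℕ} (hn : n ≤ p.natDegree + 1) :
    hankelPoly p n ≠ 0 :=
  (hankelPoly_ne_zero_and_natDegree hp n hn).1

lemma hankelPoly_mul_ne_of_natDegree_ne {p q : R[X]} (hp : p ≠ 0) (hq : q ≠ 0)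
    (hpq : p.natDegree ≠ q.natDegree) {n : ℕ} (hnp : n ≤ p.natDegree) (hnq : n ≤ q.natDegree) :
    hankelPoly p (n + 1) * hankelPoly q n ≠ hankelPoly p n * hankelPoly q (n + 1) := by
  obtain ⟨hp₀, dp₀⟩ := hankelPoly_ne_zero_and_natDegree hp n (by omega)
  obtain ⟨hp₁, dp₁⟩ := hankelPoly_ne_zero_and_natDegree hp (n + 1) (by omega)
  obtain ⟨hq₀, dq₀⟩ := hankelPoly_ne_zero_and_natDegree hq n (by omega)
  obtain ⟨hq₁, dq₁⟩ := hankelPoly_ne_zero_and_natDegree hq (n + 1) (by omega)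
  intro h
  have hdeg := congrArg natDegree h
  rw [natDegree_mul hp₁ hq₀, natDegree_mul hp₀ hq₁] at hdeg
  exact hpq (by nlinarith)
end Degrees

section PainleveForm
variable {R S : Type*} [CommRing R] [CommRing S]

/-- The numerator of the fifth Painlevé equation with `α = a ^ 2 / 2`, `β = -b ^ 2 / 2`, `γ = c` and
`δ = -1/2`, for `w = A / B` with `z w' = U / B ^ 2` and `(z d/dz)² w = V / B ^ 4`. -/
def painleveFiveForm (z a b c A B U V : R) : R :=
  2 * A * (A - B) * V - B * ((3 * A - B) * U ^ 2 + (A - B) ^ 3 * (a ^ 2 * A ^ 2 - b ^ 2 * B ^ 2) +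
    2 * c * z * A ^ 2 * (A - B) * B ^ 2 - z ^ 2 * A ^ 2 * (A + B) * B ^ 2)

lemma map_painleveFiveForm (φ : R →+* S) (z a b c A B U V : R) :
    φ (painleveFiveForm z a b c A B U V) =
      painleveFiveForm (φ z) (φ a) (φ b) (φ c) (φ A) (φ B) (φ U) (φ V) := by
  simp only [painleveFiveForm, map_sub, map_add, map_mul, map_pow, map_ofNat]

lemma painleveFiveForm_div {F : Type*} [Field F] (z a b c A U V : F) {B : F} (hB : B ≠ 0) :
    painleveFiveForm z a b c (A / B) 1 (U / B ^ 2) (V / B ^ 4) =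
      painleveFiveForm z a b c A B U V / B ^ 6 := by
  simp only [painleveFiveForm]
  field_simp
end PainleveForm

section SymmetricForm
open scoped Differential
variable {K : Type*} [Field K] [Differential K]

/-- A solution of the Noumi–Yamada symmetric form of `P_V` (affine type `A₃⁽¹⁾`) for the derivation
`z d/dz`. The weight `ε` is that of `f₀ + f₂`, in the sense that `(f₀ + f₂)′ = ε (f₀ + f₂)`;
`f₁ + f₃` then has weight `1 - ε`. -/
structure IsSymmetricSol (ε f₀ f₁ f₂ f₃ α₀ α₁ α₂ α₃ : K) : Prop where
  deriv_α₀ : α₀′ = 0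
  deriv_α₁ : α₁′ = 0
  deriv_α₂ : α₂′ = 0
  deriv_α₃ : α₃′ = 0
  sum_α : α₀ + α₁ + α₂ + α₃ = 1
  deriv_f₀ : f₀′ = f₀ * f₂ * (f₁ - f₃) + (ε - α₂) * f₀ + α₀ * f₂
  deriv_f₁ : f₁′ = f₁ * f₃ * (f₂ - f₀) + (1 - ε - α₃) * f₁ + α₁ * f₃
  deriv_f₂ : f₂′ = f₂ * f₀ * (f₃ - f₁) + (ε - α₀) * f₂ + α₂ * f₀
  deriv_f₃ : f₃′ = f₃ * f₁ * (f₀ - f₂) + (1 - ε - α₁) * f₃ + α₃ * f₁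

namespace IsSymmetricSol
variable {ε f₀ f₁ f₂ f₃ α₀ α₁ α₂ α₃ : K}

lemma rotate (h : IsSymmetricSol ε f₀ f₁ f₂ f₃ α₀ α₁ α₂ α₃) :
    IsSymmetricSol (1 - ε) f₁ f₂ f₃ f₀ α₁ α₂ α₃ α₀ where
  deriv_α₀ := h.deriv_α₁
  deriv_α₁ := h.deriv_α₂
  deriv_α₂ := h.deriv_α₃
  deriv_α₃ := h.deriv_α₀
  sum_α := by linear_combination h.sum_α
  deriv_f₀ := h.deriv_f₁
  deriv_f₁ := by rw [sub_sub_cancel]; exact h.deriv_f₂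
  deriv_f₂ := h.deriv_f₃
  deriv_f₃ := by rw [sub_sub_cancel]; exact h.deriv_f₀

lemma reflect (h : IsSymmetricSol ε f₀ f₁ f₂ f₃ α₀ α₁ α₂ α₃) (h₁ : f₁ ≠ 0) :
    IsSymmetricSol ε (f₀ - α₁ / f₁) f₁ (f₂ + α₁ / f₁) f₃ (α₀ + α₁) (-α₁) (α₂ + α₁) α₃ where
  deriv_α₀ := by rw [map_add, h.deriv_α₀, h.deriv_α₁, add_zero]
  deriv_α₁ := by rw [map_neg, h.deriv_α₁, neg_zero]
  deriv_α₂ := by rw [map_add, h.deriv_α₂, h.deriv_α₁, add_zero]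
  deriv_α₃ := h.deriv_α₃
  sum_α := by linear_combination h.sum_α
  deriv_f₀ := by
    rw [map_sub, Derivation.leibniz_div, h.deriv_α₁, h.deriv_f₀, h.deriv_f₁]
    simp only [smul_eq_mul]
    field_simp
    linear_combination (-α₁ * f₁) * h.sum_α
  deriv_f₁ := by
    rw [h.deriv_f₁]
    field_simp
    ring
  deriv_f₂ := by
    rw [map_add, Derivation.leibniz_div, h.deriv_α₁, h.deriv_f₂, h.deriv_f₁]
    simp only [smul_eq_mul]
    field_simp
    linear_combination (α₁ * f₁) * h.sum_α
  deriv_f₃ := by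
    rw [h.deriv_f₃]
    field_simp
    ring

lemma halfStep (h : IsSymmetricSol ε f₀ f₁ f₂ f₃ α₀ α₁ α₂ α₃) (h₁ : f₁ ≠ 0) (h₃ : f₃ ≠ 0) :
    IsSymmetricSol (1 - ε) f₁ (f₂ + α₁ / f₁ - α₃ / f₃) f₃ (f₀ + α₃ / f₃ - α₁ / f₁)
      (-α₁) (1 - α₀) (-α₃) (1 - α₂) := by
  have key := (h.reflect h₁).rotate.rotate.reflect h₃
  convert key.rotate.rotate.rotate using 1
  · ring
  · ring
  · linear_combination -h.sum_α
  · linear_combination -h.sum_α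

end IsSymmetricSol

/-- The Toda curvature of `x`: if the derivation is `z d/dz`, then `curvature x` is
`z ^ 2 (log x)''`. -/
def curvature (x : K) : K :=
  (Differential.logDeriv x)′ - Differential.logDeriv x

lemma curvature_mul {x y : K} (hx : x ≠ 0) (hy : y ≠ 0) :
    curvature (x * y) = curvature x + curvature y := by
  rw [curvature, curvature, curvature, Differential.logDeriv_mul x y hx hy, map_add]
  ring

/-- A solution of the symmetric form, normalised by `f₀ + f₂ = 1` and `f₁ + f₃ = z`, together with
a ratio `P` of consecutive tau functions and the curvature `p` of the later one. -/
structure IsTodaState (z f₀ f₁ f₂ f₃ α₀ α₁ α₂ α₃ P p : K) : Prop where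
  sol : IsSymmetricSol 0 f₀ f₁ f₂ f₃ α₀ α₁ α₂ α₃
  sum_even : f₀ + f₂ = 1
  sum_odd : f₁ + f₃ = z
  f₀_ne_zero : f₀ ≠ 0
  f₂_ne_zero : f₂ ≠ 0
  logDeriv_eq : Differential.logDeriv P = f₁ + α₀ - α₂ * f₀ / f₂
  curvature_eq : p = f₂ * (f₁ * f₂ * f₃ + α₁ * f₃ - α₃ * f₁)

namespace IsTodaState
variable {z f₀ f₁ f₂ f₃ α₀ α₁ α₂ α₃ P p g₀ g₁ g₂ g₃ e₁ e₃ : K}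

lemma curvature_ratio (h : IsTodaState z f₀ f₁ f₂ f₃ α₀ α₁ α₂ α₃ P p)
    (he₁ : e₁ = f₁ + α₀ / f₀ - α₂ / f₂) (he₃ : e₃ = f₃ + α₂ / f₂ - α₀ / f₀) :
    curvature P = p - f₀ * (f₀ * e₁ * e₃ + (1 - α₁) * e₁ - (1 - α₃) * e₃) := by
  have h₀ := h.f₀_ne_zero
  have h₂ := h.f₂_ne_zero
  rw [curvature, h.logDeriv_eq, h.curvature_eq]
  simp only [map_add, map_sub, Derivation.leibniz_div, Derivation.leibniz, h.sol.deriv_f₀,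
    h.sol.deriv_f₁, h.sol.deriv_f₂, h.sol.deriv_α₀, h.sol.deriv_α₂, smul_eq_mul]
  subst he₁ he₃
  obtain rfl : f₀ = 1 - f₂ := by linear_combination h.sum_even
  obtain rfl : α₃ = 1 - α₀ - α₁ - α₂ := by linear_combination h.sol.sum_α
  field_simp
  ring

lemma logDeriv_next (h : IsTodaState z f₀ f₁ f₂ f₃ α₀ α₁ α₂ α₃ P p) (hz : z ≠ 0) (hz' : z′ = z)
    (h₁ : f₁ ≠ 0) (h₃ : f₃ ≠ 0) (hP : P ≠ 0) (hg₀ : g₀ = f₂ + α₁ / f₁ - α₃ / f₃)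
    (hg₂ : g₂ = f₀ + α₃ / f₃ - α₁ / f₁) (hg₀' : g₀ ≠ 0) (hg₂' : g₂ ≠ 0) :
    Differential.logDeriv (P * p / z ^ 2) =
      f₃ + (1 - α₀) / g₀ - (1 - α₂) / g₂ + (α₀ - 1) - (α₂ - 1) * g₀ / g₂ := by
  have h₂ := h.f₂_ne_zero
  have h₁₂ := mul_ne_zero h₁ h₂
  have h₁₂₃ := mul_ne_zero h₁₂ h₃
  have hp : p = f₁ * f₂ * f₃ * g₀ := by
    rw [h.curvature_eq, hg₀]
    field_simp
  have hp₀ : p ≠ 0 := hp ▸ mul_ne_zero h₁₂₃ hg₀'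
  have hexpand : Differential.logDeriv (P * p / z ^ 2) =
      Differential.logDeriv P + (f₁′ / f₁ + f₂′ / f₂ + f₃′ / f₃ + g₀′ / g₀) - 2 := by
    have hlogz : Differential.logDeriv z = 1 := by rw [Differential.logDeriv, hz', div_self hz]
    rw [Differential.logDeriv_div _ _ (mul_ne_zero hP hp₀) (pow_ne_zero 2 hz),
      Differential.logDeriv_mul _ _ hP hp₀, Differential.logDeriv_pow, hlogz, hp,
      Differential.logDeriv_mul _ _ h₁₂₃ hg₀', Differential.logDeriv_mul _ _ h₁₂ h₃,
      Differential.logDeriv_mul _ _ h₁ h₂, Nat.cast_ofNat, mul_one]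
    rfl
  have hg₀_deriv := (h.sol.halfStep h₁ h₃).deriv_f₁
  rw [← hg₀, ← hg₂] at hg₀_deriv
  rw [hexpand, h.logDeriv_eq, h.sol.deriv_f₁, h.sol.deriv_f₂, h.sol.deriv_f₃, hg₀_deriv]
  obtain rfl : g₂ = 1 - g₀ := by linear_combination hg₂ + hg₀ + h.sum_even
  obtain rfl : f₀ = 1 - f₂ := by linear_combination h.sum_even
  obtain rfl : α₃ = f₃ * (f₂ + α₁ / f₁ - g₀) := by rw [hg₀]; field_simp; ring
  field_simp
  ring

/-- The Bäcklund translation, built from two half steps, advances the Toda chain by one. -/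
lemma next (h : IsTodaState z f₀ f₁ f₂ f₃ α₀ α₁ α₂ α₃ P p) (hz : z ≠ 0) (hz' : z′ = z)
    (h₁ : f₁ ≠ 0) (h₃ : f₃ ≠ 0) (hP : P ≠ 0) (hg₀ : g₀ = f₂ + α₁ / f₁ - α₃ / f₃)
    (hg₂ : g₂ = f₀ + α₃ / f₃ - α₁ / f₁) (hg₀' : g₀ ≠ 0) (hg₂' : g₂ ≠ 0)
    (hg₁ : g₁ = f₃ + (1 - α₀) / g₀ - (1 - α₂) / g₂)
    (hg₃ : g₃ = f₁ + (1 - α₂) / g₂ - (1 - α₀) / g₀) :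
    IsTodaState z g₀ g₁ g₂ g₃ (α₀ - 1) (α₁ + 1) (α₂ - 1) (α₃ + 1)
      (P * p / z ^ 2) (p + curvature (P * p / z ^ 2)) := by
  have hsol := h.sol.halfStep h₁ h₃
  rw [← hg₀, ← hg₂] at hsol
  have hstate : IsTodaState z g₀ g₁ g₂ g₃ (α₀ - 1) (α₁ + 1) (α₂ - 1) (α₃ + 1) (P * p / z ^ 2)
      (g₂ * (g₁ * g₂ * g₃ + (α₁ + 1) * g₃ - (α₃ + 1) * g₁)) :=
    { sol := by convert hsol.halfStep hg₀' hg₂' using 1 <;> first | assumption | ring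
      sum_even := by linear_combination hg₀ + hg₂ + h.sum_even
      sum_odd := by linear_combination hg₁ + hg₃ + h.sum_odd
      f₀_ne_zero := hg₀'
      f₂_ne_zero := hg₂'
      logDeriv_eq := hg₁ ▸ h.logDeriv_next hz hz' h₁ h₃ hP hg₀ hg₂ hg₀' hg₂'
      curvature_eq := rfl }
  have hcurv := hstate.curvature_ratio (e₁ := f₃) (e₃ := f₁) (by rw [hg₁]; ring)
    (by rw [hg₃]; ring)
  have hp : p = g₀ * (g₀ * f₃ * f₁ + (1 - (α₁ + 1)) * f₃ - (1 - (α₃ + 1)) * f₁) := by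
    rw [h.curvature_eq, hg₀]
    field_simp
    ring
  convert hstate using 1
  linear_combination hcurv + hp
end IsTodaState

/-- Two coupled Toda states, the second one on the data rotated by two steps. -/
structure IsTodaPair (z f₀ f₁ f₂ f₃ α₀ α₁ α₂ α₃ P p Q q : K) : Prop where
  left : IsTodaState z f₀ f₁ f₂ f₃ α₀ α₁ α₂ α₃ P p
  right : IsTodaState z f₂ f₃ f₀ f₁ α₂ α₃ α₀ α₁ Q q
  coupling : P * f₂ + Q * f₀ = 0

lemma IsTodaPair.next {z f₀ f₁ f₂ f₃ α₀ α₁ α₂ α₃ P p Q q : K}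
    (h : IsTodaPair z f₀ f₁ f₂ f₃ α₀ α₁ α₂ α₃ P p Q q) (hz : z ≠ 0) (hz' : z′ = z)
    (hP : P * p ≠ 0) (hQ : Q * q ≠ 0) (hPQ : P * p ≠ Q * q) :
    ∃ g₀ g₁ g₂ g₃, IsTodaPair z g₀ g₁ g₂ g₃ (α₀ - 1) (α₁ + 1) (α₂ - 1) (α₃ + 1)
      (P * p / z ^ 2) (p + curvature (P * p / z ^ 2))
      (Q * q / z ^ 2) (q + curvature (Q * q / z ^ 2)) := by
  have hsum : P * p - Q * q = P * f₂ * f₁ * f₃ := by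
    rw [h.left.curvature_eq, h.right.curvature_eq]
    linear_combination P * f₂ * f₁ * f₃ * h.left.sum_even -
      (f₃ * f₀ * f₁ + α₃ * f₁ - α₁ * f₃) * h.coupling
  obtain ⟨⟨-, h₁⟩, h₃⟩ : (P * f₂ ≠ 0 ∧ f₁ ≠ 0) ∧ f₃ ≠ 0 := by
    rw [← mul_ne_zero_iff, ← mul_ne_zero_iff, ← hsum]
    exact sub_ne_zero.mpr hPQ
  have hp : p = f₁ * f₂ * f₃ * (f₂ + α₁ / f₁ - α₃ / f₃) := by
    rw [h.left.curvature_eq]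
    field_simp
  have hq : q = f₃ * f₀ * f₁ * (f₀ + α₃ / f₃ - α₁ / f₁) := by
    rw [h.right.curvature_eq]
    field_simp
  have hg₀ := right_ne_zero_of_mul (hp ▸ right_ne_zero_of_mul hP)
  have hg₂ := right_ne_zero_of_mul (hq ▸ right_ne_zero_of_mul hQ)
  refine ⟨_, _, _, _,
    h.left.next hz hz' h₁ h₃ (left_ne_zero_of_mul hP) rfl rfl hg₀ hg₂ rfl rfl,
    h.right.next hz hz' h₃ h₁ (left_ne_zero_of_mul hQ) rfl rfl hg₂ hg₀ rfl rfl, ?_⟩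
  rw [hp, hq]
  linear_combination f₁ * f₃ * (f₂ + α₁ / f₁ - α₃ / f₃) * (f₀ + α₃ / f₃ - α₁ / f₁) / z ^ 2 *
    h.coupling

/-- A chain of tau functions with `F 0 = 1`, linked by the Toda equation, which for the derivation
`z d/dz` reads `F (n+2) F n = F (n+1)² (log F (n+1))''`. -/
structure IsTodaChain (z : K) (F : ℕ → K) : Prop where
  zero : F 0 = 1
  toda : ∀ n, z ^ 2 * (F (n + 2) * F n) = F (n + 1) ^ 2 * curvature (F (n + 1))

namespace IsTodaChain
variable {z : K} {F G : ℕ → K}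

lemma ratio_succ (h : IsTodaChain z F) (hz : z ≠ 0) {n : ℕ} (h₀ : F n ≠ 0) (h₁ : F (n + 1) ≠ 0) :
    F (n + 1) / F n * curvature (F (n + 1)) / z ^ 2 = F (n + 2) / F (n + 1) := by
  field_simp
  linear_combination -h.toda n

lemma ratio_mul_curvature_ne_zero (h : IsTodaChain z F) (hz : z ≠ 0) {n : ℕ} (h₀ : F n ≠ 0)
    (h₁ : F (n + 1) ≠ 0) (h₂ : F (n + 2) ≠ 0) :
    F (n + 1) / F n * curvature (F (n + 1)) ≠ 0 := by
  intro h_zero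
  have hratio := h.ratio_succ hz h₀ h₁
  rw [h_zero, zero_div] at hratio
  exact div_ne_zero h₂ h₁ hratio.symm

lemma curvature_succ {n : ℕ} (h₁ : F (n + 1) ≠ 0) (h₂ : F (n + 2) ≠ 0) :
    curvature (F (n + 1)) + curvature (F (n + 2) / F (n + 1)) = curvature (F (n + 2)) := by
  rw [← curvature_mul h₁ (div_ne_zero h₂ h₁), mul_div_cancel₀ _ h₁]

theorem exists_todaPair (hF : IsTodaChain z F) (hG : IsTodaChain z G) (hz : z ≠ 0) (hz' : z′ = z)
    {f₀ f₁ f₂ f₃ α₀ α₁ α₂ α₃ : K}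
    (hbase : IsTodaPair z f₀ f₁ f₂ f₃ α₀ α₁ α₂ α₃ (F 1) (curvature (F 1)) (G 1) (curvature (G 1)))
    (n : ℕ) (hF₀ : ∀ i ≤ n + 1, F i ≠ 0) (hG₀ : ∀ i ≤ n + 1, G i ≠ 0)
    (hFG : ∀ i ≤ n, F (i + 1) / F i ≠ G (i + 1) / G i) :
    ∃ f₀ f₁ f₂ f₃, IsTodaPair z f₀ f₁ f₂ f₃ (α₀ - n) (α₁ + n) (α₂ - n) (α₃ + n)
      (F (n + 1) / F n) (curvature (F (n + 1))) (G (n + 1) / G n) (curvature (G (n + 1))) := by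
  induction n with
  | zero =>
    refine ⟨f₀, f₁, f₂, f₃, ?_⟩
    simpa [hF.zero, hG.zero] using hbase
  | succ n ih =>
    obtain ⟨f₀, f₁, f₂, f₃, h⟩ := ih (fun i hi => hF₀ i (by omega)) (fun i hi => hG₀ i (by omega))
      fun i hi => hFG i (by omega)
    have hFn := hF₀ n (by omega)
    have hFn₁ := hF₀ (n + 1) (by omega)
    have hFn₂ := hF₀ (n + 2) le_rfl
    have hGn := hG₀ n (by omega)
    have hGn₁ := hG₀ (n + 1) (by omega)
    have hGn₂ := hG₀ (n + 2) le_rfl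
    have hFratio := hF.ratio_succ hz hFn hFn₁
    have hGratio := hG.ratio_succ hz hGn hGn₁
    have hFG_mul : F (n + 1) / F n * curvature (F (n + 1)) ≠
        G (n + 1) / G n * curvature (G (n + 1)) := by
      intro heq
      rw [heq, hGratio] at hFratio
      exact hFG (n + 1) le_rfl hFratio.symm
    obtain ⟨g₀, g₁, g₂, g₃, hg⟩ := h.next hz hz'
      (hF.ratio_mul_curvature_ne_zero hz hFn hFn₁ hFn₂)
      (hG.ratio_mul_curvature_ne_zero hz hGn hGn₁ hGn₂) hFG_mul
    refine ⟨g₀, g₁, g₂, g₃, ?_⟩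
    rw [hFratio, hGratio, curvature_succ hFn₁ hFn₂, curvature_succ hGn₁ hGn₂] at hg
    convert hg using 1 <;> push_cast <;> ring
end IsTodaChain

/-- The fifth Painlevé equation with `δ = -1/2` for the derivation `z d/dz`, cleared of
denominators, with parameters `α = a ^ 2 / 2`, `β = -b ^ 2 / 2` and `γ = c`. -/
def IsPainleveFive (z a b c w : K) : Prop :=
  painleveFiveForm z a b c w 1 w′ w′′ = 0

lemma IsTodaPair.isPainleveFive {z f₀ f₁ f₂ f₃ α₀ α₁ α₂ α₃ P p Q q : K}
    (h : IsTodaPair z f₀ f₁ f₂ f₃ α₀ α₁ α₂ α₃ P p Q q) (hQ : Q ≠ 0) :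
    IsPainleveFive z α₂ α₀ (α₁ - α₃) (P / Q) := by
  have h₂ := h.left.f₂_ne_zero
  have hsol := h.left.sol
  obtain rfl : f₀ = 1 - f₂ := by linear_combination h.left.sum_even
  obtain rfl : α₃ = 1 - α₀ - α₁ - α₂ := by linear_combination hsol.sum_α
  set w := P / Q
  have hw : w = 1 - 1 / f₂ := by
    simp only [w]
    field_simp
    linear_combination h.coupling
  have hw' : w′ = w * (f₁ - f₃) - (1 - w) * (α₀ + α₂ * w) := by
    rw [hw, map_sub, Derivation.leibniz_div, Derivation.map_one_eq_zero, hsol.deriv_f₂]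
    simp only [smul_eq_mul]
    field_simp
    ring
  have hw'' : w′′ = w′ * (f₁ - f₃) + w * (f₁′ - f₃′) + w′ * (α₀ + α₂ * w) -
      (1 - w) * (α₂ * w′) := by
    conv_lhs => rw [hw']
    simp only [map_sub, map_add, Derivation.leibniz, Derivation.map_one_eq_zero, hsol.deriv_α₀,
      hsol.deriv_α₂, smul_eq_mul]
    ring
  rw [IsPainleveFive, painleveFiveForm, hw'', hw', hsol.deriv_f₁, hsol.deriv_f₃, hw,
    ← h.left.sum_odd]
  field_simp
  ring

variable {z b N P Q : K}

lemma isSymmetricSol_of_contiguous (hz' : z′ = z) (hb : b′ = 0) (hN : N′ = 0)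
    (hP : P ≠ 0) (hQ : Q ≠ 0) (hPQ : P - Q ≠ 0) (hP' : P′ = N * P - b * Q)
    (hQ' : Q′ = z * Q + N * P - b * Q) :
    IsSymmetricSol 0 (P / (P - Q)) ((P - Q) * (b / P - N / Q)) (-Q / (P - Q))
      (z - (P - Q) * (b / P - N / Q)) (-b) (b - N) N 1 where
  deriv_α₀ := by rw [map_neg, hb, neg_zero]
  deriv_α₁ := by rw [map_sub, hb, hN, sub_zero]
  deriv_α₂ := hN
  deriv_α₃ := Derivation.map_one_eq_zero _
  sum_α := by ring
  deriv_f₀ := by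
    rw [Derivation.leibniz_div, map_sub, hP', hQ', smul_eq_mul, smul_eq_mul]
    field_simp
    ring
  deriv_f₁ := by
    simp only [Derivation.leibniz, Derivation.leibniz_div, map_sub, hb, hN, hP', hQ', smul_eq_mul]
    field_simp
    ring
  deriv_f₂ := by
    rw [Derivation.leibniz_div, map_sub, map_neg, hP', hQ', smul_eq_mul, smul_eq_mul]
    field_simp
    ring
  deriv_f₃ := by
    simp only [Derivation.leibniz, Derivation.leibniz_div, map_sub, hz', hb, hN, hP', hQ',
      smul_eq_mul]
    field_simp
    ring

/-- The contiguous relations are those of `P = L_N` and `Q = L_{N-1}` with parameter `b - N`. -/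
theorem isTodaPair_of_contiguous (hz' : z′ = z) (hb : b′ = 0) (hN : N′ = 0)
    (hP : P ≠ 0) (hQ : Q ≠ 0) (hPQ : P ≠ Q) (hP' : P′ = N * P - b * Q)
    (hQ' : Q′ = z * Q + N * P - b * Q) :
    IsTodaPair z (P / (P - Q)) ((P - Q) * (b / P - N / Q)) (-Q / (P - Q))
      (z - (P - Q) * (b / P - N / Q)) (-b) (b - N) N 1 P (curvature P) Q (curvature Q) := by
  have hsub := sub_ne_zero.mpr hPQ
  have hsol := isSymmetricSol_of_contiguous hz' hb hN hP hQ hsub hP' hQ'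
  have hsol' := hsol.rotate.rotate
  rw [sub_sub_cancel] at hsol'
  have heven : P / (P - Q) + -Q / (P - Q) = 1 := by field_simp; ring
  have hlogP : Differential.logDeriv P = N - b * Q / P := by
    rw [Differential.logDeriv, hP']; field_simp
  have hlogQ : Differential.logDeriv Q = z + N * P / Q - b := by
    rw [Differential.logDeriv, hQ']; field_simp
  have h₀ := div_ne_zero hP hsub
  have h₂ := div_ne_zero (neg_ne_zero.mpr hQ) hsub
  refine ⟨⟨hsol, heven, by ring, h₀, h₂, ?_, ?_⟩,
    ⟨hsol', by rw [add_comm, heven], by ring, h₂, h₀, ?_, ?_⟩, by ring⟩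
  · rw [hlogP]
    field_simp
    ring
  · simp only [curvature, hlogP, map_sub, Derivation.leibniz, Derivation.leibniz_div, hb, hN,
      hP', hQ', smul_eq_mul]
    field_simp
    ring
  · rw [hlogQ]
    field_simp
    ring
  · simp only [curvature, hlogQ, map_sub, map_add, Derivation.leibniz, Derivation.leibniz_div, hz',
      hb, hN, hP', hQ', smul_eq_mul]
    field_simp
    ring
end SymmetricForm

theorem exists_derivation_extending {k A B : Type*} [CommRing k] [CommRing A] [CommRing B]
    [Algebra k A] [Algebra A B] [Algebra k B] [IsScalarTower k A B] [Algebra.FormallyEtale A B]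
    (d : Derivation k A A) :
    ∃ D : Derivation k B B, ∀ a, D (algebraMap A B a) = algebraMap A B (d a) := by
  have hΩ := KaehlerDifferential.isBaseChange_of_formallyEtale k A B
  let φ := hΩ.lift (Algebra.linearMap A B ∘ₗ d.liftKaehlerDifferential)
  refine ⟨φ.compDer (KaehlerDifferential.D k B), fun a => ?_⟩
  have h := hΩ.lift_eq (Algebra.linearMap A B ∘ₗ d.liftKaehlerDifferential)
    (KaehlerDifferential.D k A a)
  simpa [φ] using h

section RationalFunctions
open scoped Differential
open Polynomial

/-- The numerator of the derivative of `A / B` over the denominator `B ^ 2`. -/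
def quotientDeriv {R : Type*} [CommRing R] (A B : R[X]) : R[X] :=
  derivative A * B - A * derivative B

/-- The numerator of the Euler derivative `(z d/dz)²` of `A / B` over the denominator `B ^ 4`. -/
def quotientEuler {R : Type*} [CommRing R] (A B : R[X]) : R[X] :=
  X * quotientDeriv A B * B ^ 2 + X ^ 2 * quotientDeriv (quotientDeriv A B) (B ^ 2)

variable {k K : Type*} [Field k] [Field K] [Algebra k[X] K] [IsFractionRing k[X] K]

local notation "ι" => algebraMap k[X] K

theorem exists_eulerDifferential :
    ∃ _ : Differential K, ∀ q : k[X], (ι q)′ = ι (X * derivative q) := by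
  let : Algebra k K := ((algebraMap k[X] K).comp C).toAlgebra
  have : IsScalarTower k k[X] K := IsScalarTower.of_algebraMap_eq fun _ => rfl
  have : Algebra.FormallyEtale k[X] K := .of_isLocalization (nonZeroDivisors k[X])
  obtain ⟨D, hD⟩ := exists_derivation_extending (k := k) (B := K) ((X : k[X]) • derivative')
  exact ⟨⟨D.restrictScalars ℤ⟩, fun q => hD q⟩

variable [Differential K]

lemma isTodaChain_hankelPoly (hθ : ∀ q : k[X], (ι q)′ = ι (X * derivative q)) (p : k[X]) :
    IsTodaChain (ι X) fun n => ι (hankelPoly p n) where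
  zero := by rw [hankelPoly, hankelDet_zero, map_one]
  toda n := by
    rw [← map_mul, hankelPoly_toda]
    set q := hankelPoly p (n + 1)
    obtain hq | hq := eq_or_ne q 0
    · simp [hq, todaForm]
    have hq' : ι q ≠ 0 := by rwa [ne_eq, IsFractionRing.to_map_eq_zero_iff]
    rw [curvature, Differential.logDeriv, Derivation.leibniz_div, todaForm, hθ, hθ]
    simp only [map_mul, map_sub, map_pow, smul_eq_mul, derivative_mul, derivative_X, one_mul,
      map_add]
    field_simp
    ring

lemma deriv_algebraMap_div (hθ : ∀ q : k[X], (ι q)′ = ι (X * derivative q)) (A B : k[X]) :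
    (ι A / ι B)′ = ι (X * quotientDeriv A B) / ι B ^ 2 := by
  obtain hB | hB := eq_or_ne (ι B) 0
  · simp [hB]
  rw [Derivation.leibniz_div, hθ, hθ, quotientDeriv]
  simp only [map_mul, map_sub, smul_eq_mul]
  field_simp

lemma painleveFiveForm_eq_zero_of_isPainleveFive
    (hθ : ∀ q : k[X], (ι q)′ = ι (X * derivative q)) {a b c : k} {A B : k[X]} (hB : B ≠ 0)
    (h : IsPainleveFive (ι X) (ι (C a)) (ι (C b)) (ι (C c)) (ι A / ι B)) :
    painleveFiveForm X (C a) (C b) (C c) A B (X * quotientDeriv A B) (quotientEuler A B) = 0 := by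
  have hιB : ι B ≠ 0 := by rwa [ne_eq, IsFractionRing.to_map_eq_zero_iff]
  have hX : (ι X)′ = ι X := by rw [hθ, derivative_X, mul_one]
  have hsecond : (ι A / ι B)′′ = ι (quotientEuler A B) / ι B ^ 4 := by
    rw [deriv_algebraMap_div hθ, ← map_pow, map_mul, mul_div_assoc, Derivation.leibniz,
      deriv_algebraMap_div hθ, hX, quotientEuler]
    simp only [map_mul, map_add, map_pow, smul_eq_mul]
    field_simp
    ring
  rw [IsPainleveFive, hsecond, deriv_algebraMap_div hθ, painleveFiveForm_div _ _ _ _ _ _ _ hιB,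
    div_eq_zero_iff] at h
  rw [← IsFractionRing.to_map_eq_zero_iff (K := K), map_painleveFiveForm]
  exact h.resolve_right (pow_ne_zero 6 hιB)

variable [CharZero k] {p q : k[X]} {N b : k}

theorem isPainleveFive_hankelPoly_ratio (hθ : ∀ q : k[X], (ι q)′ = ι (X * derivative q))
    (hp : X * derivative p = C N * p - C b * q)
    (hq : X * derivative q = X * q + C N * p - C b * q) (hp₀ : p ≠ 0) (hq₀ : q ≠ 0)
    (hpq : p.natDegree ≠ q.natDegree) {n : ℕ} (hnp : n ≤ p.natDegree) (hnq : n ≤ q.natDegree) :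
    IsPainleveFive (ι X) (ι (C (N - n))) (ι (C (-b - n))) (ι (C (b - N - 1)))
      (ι (hankelPoly q n * hankelPoly p (n + 1)) / ι (hankelPoly p n * hankelPoly q (n + 1))) := by
  have hι {r : k[X]} (hr : r ≠ 0) : ι r ≠ 0 := by rwa [ne_eq, IsFractionRing.to_map_eq_zero_iff]
  have hconst (r : k) : (ι (C r))′ = 0 := by rw [hθ, derivative_C, mul_zero, map_zero]
  have hX : (ι X)′ = ι X := by rw [hθ, derivative_X, mul_one]
  have hF {i : ℕ} (hi : i ≤ n + 1) : ι (hankelPoly p i) ≠ 0 :=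
    hι (hankelPoly_ne_zero hp₀ (by omega))
  have hG {i : ℕ} (hi : i ≤ n + 1) : ι (hankelPoly q i) ≠ 0 :=
    hι (hankelPoly_ne_zero hq₀ (by omega))
  have hbase := isTodaPair_of_contiguous hX (hconst b) (hconst N) (hι hp₀) (hι hq₀)
    ((IsFractionRing.injective k[X] K).ne (ne_of_apply_ne natDegree hpq))
    (by rw [hθ, hp]; simp only [map_sub, map_mul])
    (by rw [hθ, hq]; simp only [map_sub, map_add, map_mul])
  obtain ⟨f₀, f₁, f₂, f₃, h⟩ := (isTodaChain_hankelPoly hθ p).exists_todaPair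
    (isTodaChain_hankelPoly hθ q) (hι X_ne_zero) hX (by simpa [hankelPoly] using hbase) n
    (fun i => hF) (fun i => hG) fun i hi => by
      rw [ne_eq, div_eq_div_iff (hF (by omega)) (hG (by omega)), ← map_mul, ← map_mul,
        mul_comm (hankelPoly q _)]
      exact (IsFractionRing.injective k[X] K).ne
        (hankelPoly_mul_ne_of_natDegree_ne hp₀ hq₀ hpq (by omega) (by omega))
  convert h.isPainleveFive (div_ne_zero (hG le_rfl) (hG n.le_succ)) using 1
  · simp
  · simp
  · simp
  · rw [map_mul, map_mul, div_div_div_eq, mul_comm (ι (hankelPoly q n))]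

theorem painleveFiveForm_hankelPoly_ratio (hp : X * derivative p = C N * p - C b * q)
    (hq : X * derivative q = X * q + C N * p - C b * q) (hp₀ : p ≠ 0) (hq₀ : q ≠ 0)
    (hpq : p.natDegree ≠ q.natDegree) {n : ℕ} (hnp : n ≤ p.natDegree) (hnq : n ≤ q.natDegree)
    {A B : k[X]} (hA : A = hankelPoly q n * hankelPoly p (n + 1))
    (hB : B = hankelPoly p n * hankelPoly q (n + 1)) :
    painleveFiveForm X (C (N - n)) (C (-b - n)) (C (b - N - 1)) A B
      (X * quotientDeriv A B) (quotientEuler A B) = 0 := by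
  obtain ⟨_, hθ⟩ := exists_eulerDifferential (k := k) (K := FractionRing k[X])
  have hPV := isPainleveFive_hankelPoly_ratio hθ hp hq hp₀ hq₀ hpq hnp hnq
  rw [← hA, ← hB] at hPV
  refine painleveFiveForm_eq_zero_of_isPainleveFive hθ ?_ hPV
  rw [hB]
  exact mul_ne_zero (hankelPoly_ne_zero hp₀ (by omega)) (hankelPoly_ne_zero hq₀ (by omega))

end RationalFunctions

section RealSolutions
open Polynomial

lemma hasDerivAt_eval_neg_div (A B : ℝ[X]) {t : ℝ} (hB : B.eval (-t) ≠ 0) :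
    HasDerivAt (fun s => A.eval (-s) / B.eval (-s))
      (-((quotientDeriv A B).eval (-t) / (B ^ 2).eval (-t))) t := by
  have hA' := (A.hasDerivAt (-t)).comp t (hasDerivAt_neg t)
  have hB' := (B.hasDerivAt (-t)).comp t (hasDerivAt_neg t)
  refine (hA'.div hB' hB).congr_deriv ?_
  simp only [quotientDeriv, eval_sub, eval_mul, eval_pow, Function.comp_apply]
  ring

lemma iteratedDeriv_two_eval_neg_div (A B : ℝ[X]) {t : ℝ} (hB : B.eval (-t) ≠ 0) :
    iteratedDeriv 2 (fun s => A.eval (-s) / B.eval (-s)) t =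
      (quotientDeriv (quotientDeriv A B) (B ^ 2)).eval (-t) / (B ^ 4).eval (-t) := by
  have hderiv : deriv (fun s => A.eval (-s) / B.eval (-s)) =ᶠ[nhds t]
      fun s => -((quotientDeriv A B).eval (-s) / (B ^ 2).eval (-s)) := by
    have hcont : ContinuousAt (fun s => B.eval (-s)) t := by fun_prop
    filter_upwards [hcont.eventually_ne hB] with s hs
    exact (hasDerivAt_eval_neg_div A B hs).deriv
  rw [iteratedDeriv_succ, iteratedDeriv_one, hderiv.deriv_eq]
  have hB₂ : (B ^ 2).eval (-t) ≠ 0 := by rw [eval_pow]; exact pow_ne_zero 2 hB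
  rw [deriv.fun_neg, (hasDerivAt_eval_neg_div _ _ hB₂).deriv, neg_neg, ← pow_mul]

/-- The Euler derivative is invariant under `z ↦ -z`, which only changes the sign of `γ`. -/
lemma pv_of_painleveFiveForm {w : ℝ → ℝ} {z a b c : ℝ} (hz : z ≠ 0) (h₀ : w z ≠ 0) (h₁ : w z ≠ 1)
    (h : painleveFiveForm (-z) a b c (w z) 1 (z * deriv w z)
      (z * deriv w z + z ^ 2 * iteratedDeriv 2 w z) = 0) :
    PV (a ^ 2 / 2) (-b ^ 2 / 2) (-c) w z := by
  have h₁' := sub_ne_zero.mpr h₁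
  rw [painleveFiveForm] at h
  rw [PV]
  field_simp
  linear_combination h

theorem pv_eval_neg_div {A B : ℝ[X]} {a b c z : ℝ}
    (h : painleveFiveForm X (C a) (C b) (C c) A B (X * quotientDeriv A B) (quotientEuler A B) = 0)
    (hz : z ≠ 0) (hB : B.eval (-z) ≠ 0) (h₀ : A.eval (-z) / B.eval (-z) ≠ 0)
    (h₁ : A.eval (-z) / B.eval (-z) ≠ 1) :
    PV (a ^ 2 / 2) (-b ^ 2 / 2) (-c) (fun t => A.eval (-t) / B.eval (-t)) z := by
  have heval := congrArg (evalRingHom (-z)) h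
  rw [map_painleveFiveForm, map_zero] at heval
  simp only [coe_evalRingHom, eval_X, eval_C] at heval
  refine pv_of_painleveFiveForm hz h₀ h₁ ?_
  rw [(hasDerivAt_eval_neg_div A B hB).deriv, iteratedDeriv_two_eval_neg_div A B hB]
  have hform := painleveFiveForm_div (-z) a b c (A.eval (-z)) ((X * quotientDeriv A B).eval (-z))
    ((quotientEuler A B).eval (-z)) hB
  rw [heval, zero_div] at hform
  convert hform using 1
  congr 1
  · simp only [eval_mul, eval_X, eval_pow]
    ring
  · simp [quotientEuler]
    field_simp

end RealSolutions

section Laguerre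
open Polynomial

lemma succ_mul_genBinom_succ (x : ℝ) (r : ℕ) :
    ((r : ℝ) + 1) * genBinom x (r + 1) = (x - r) * genBinom x r := by
  have hr : (r.factorial : ℝ) ≠ 0 := mod_cast r.factorial_ne_zero
  rw [genBinom, genBinom, prod_range_succ, Nat.factorial_succ]
  push_cast
  field_simp

lemma succ_mul_genBinom_succ' (x : ℝ) (r : ℕ) :
    ((r : ℝ) + 1) * genBinom (x + 1) (r + 1) = (x + 1) * genBinom x r := by
  have hr : (r.factorial : ℝ) ≠ 0 := mod_cast r.factorial_ne_zero
  rw [genBinom, genBinom, prod_range_succ', Nat.factorial_succ]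
  push_cast
  simp only [add_sub_add_right_eq_sub]
  field_simp
  ring

lemma genBinom_succ_succ (x : ℝ) (r : ℕ) :
    genBinom (x + 1) (r + 1) = genBinom x r + genBinom x (r + 1) := by
  have hr : (r : ℝ) + 1 ≠ 0 := by positivity
  apply mul_left_cancel₀ hr
  linear_combination succ_mul_genBinom_succ' x r - succ_mul_genBinom_succ x r

/-- The associated Laguerre polynomial `L_N^{(a)}` as a formal polynomial. -/
def laguerrePoly (N : ℕ) (a : ℝ) : ℝ[X] :=
  ∑ k ∈ range (N + 1), C ((-1) ^ k * genBinom (N + a) (N - k) / k.factorial) * X ^ k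

lemma laguerrePoly_coeff (N : ℕ) (a : ℝ) (k : ℕ) :
    (laguerrePoly N a).coeff k =
      if k ≤ N then (-1) ^ k * genBinom (N + a) (N - k) / k.factorial else 0 := by
  simp [laguerrePoly]

lemma laguerrePoly_coeff_of_lt {N k : ℕ} (h : N < k) (a : ℝ) :
    (laguerrePoly N a).coeff k = 0 := by
  rw [laguerrePoly_coeff, if_neg h.not_ge]

lemma laguerrePoly_coeff_self (N : ℕ) (a : ℝ) :
    (laguerrePoly N a).coeff N = (-1) ^ N / N.factorial := by
  simp [laguerrePoly_coeff, genBinom]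

lemma laguerrePoly_coeff_add (k r : ℕ) (a : ℝ) :
    (laguerrePoly (k + r) a).coeff k = (-1) ^ k * genBinom (k + r + a) r / k.factorial := by
  rw [laguerrePoly_coeff, if_pos (Nat.le_add_right k r), Nat.add_sub_cancel_left, Nat.cast_add]

lemma laguerrePoly_coeff_self_ne_zero (N : ℕ) (a : ℝ) : (laguerrePoly N a).coeff N ≠ 0 := by
  rw [laguerrePoly_coeff_self]
  positivity

lemma laguerrePoly_ne_zero (N : ℕ) (a : ℝ) : laguerrePoly N a ≠ 0 := fun h =>
  laguerrePoly_coeff_self_ne_zero N a (by rw [h, coeff_zero])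

lemma natDegree_laguerrePoly (N : ℕ) (a : ℝ) : (laguerrePoly N a).natDegree = N :=
  natDegree_eq_of_le_of_coeff_ne_zero
    (natDegree_le_iff_coeff_eq_zero.mpr fun _ hk => laguerrePoly_coeff_of_lt hk a)
    (laguerrePoly_coeff_self_ne_zero N a)

lemma X_mul_derivative_laguerrePoly (M : ℕ) (a : ℝ) :
    X * derivative (laguerrePoly (M + 1) a) =
      C ((M : ℝ) + 1) * laguerrePoly (M + 1) a - C (M + 1 + a) * laguerrePoly M a := by
  ext k
  rw [coeff_X_mul_derivative, coeff_sub, coeff_C_mul, coeff_C_mul]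
  obtain hk | rfl | hk := lt_trichotomy (M + 1) k
  · rw [laguerrePoly_coeff_of_lt hk, laguerrePoly_coeff_of_lt (by omega)]
    ring
  · rw [laguerrePoly_coeff_of_lt M.lt_succ_self]
    push_cast
    ring
  · obtain ⟨r, rfl⟩ := Nat.exists_eq_add_of_le (Nat.le_of_lt_succ hk)
    have hbinom := succ_mul_genBinom_succ' (k + r + a) r
    rw [add_assoc, laguerrePoly_coeff_add, laguerrePoly_coeff_add]
    push_cast
    rw [show (k : ℝ) + (r + 1) + a = k + r + a + 1 by ring]
    linear_combination (-(-1) ^ k / (k.factorial : ℝ)) * hbinom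

lemma derivative_laguerrePoly_succ (M : ℕ) (a : ℝ) :
    derivative (laguerrePoly (M + 1) a) = derivative (laguerrePoly M a) - laguerrePoly M a := by
  ext k
  rw [coeff_sub, coeff_derivative, coeff_derivative]
  have hk₀ : (k.factorial : ℝ) ≠ 0 := mod_cast k.factorial_ne_zero
  obtain hk | rfl | hk := lt_trichotomy M k
  · rw [laguerrePoly_coeff_of_lt hk, laguerrePoly_coeff_of_lt (by omega),
      laguerrePoly_coeff_of_lt (by omega)]
    ring
  · rw [laguerrePoly_coeff_self, laguerrePoly_coeff_self, laguerrePoly_coeff_of_lt M.lt_succ_self,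
      Nat.factorial_succ]
    push_cast
    field_simp
    ring
  · obtain ⟨r, rfl⟩ := Nat.exists_eq_add_of_le (Nat.succ_le_of_lt hk)
    have hbinom := genBinom_succ_succ (k + 1 + r + a) r
    rw [add_assoc, laguerrePoly_coeff_add, laguerrePoly_coeff_add, Nat.succ_add_eq_add_succ,
      laguerrePoly_coeff_add, Nat.succ_eq_add_one, Nat.factorial_succ]
    push_cast
    rw [show (k : ℝ) + 1 + (r + 1) + a = k + 1 + r + a + 1 by ring,
      show (k : ℝ) + (r + 1) + a = k + 1 + r + a by ring, hbinom]
    field_simp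
    ring

lemma X_mul_derivative_laguerrePoly_pred (M : ℕ) (a : ℝ) :
    X * derivative (laguerrePoly M a) = X * laguerrePoly M a +
      C ((M : ℝ) + 1) * laguerrePoly (M + 1) a - C (M + 1 + a) * laguerrePoly M a := by
  linear_combination X_mul_derivative_laguerrePoly M a - X * derivative_laguerrePoly_succ M a

lemma lagL_natCast (N : ℕ) (a : ℝ) : lagL N a = fun z => (laguerrePoly N a).eval z := by
  funext z
  rw [lagL, if_neg (by omega), laguerrePoly, eval_finsetSum]
  simp only [Int.toNat_natCast, Int.cast_natCast, eval_mul, eval_C, eval_pow, eval_X]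
  exact sum_congr rfl fun k _ => by ring

lemma iteratedDeriv_eval {𝕜 : Type*} [NontriviallyNormedField 𝕜] (p : 𝕜[X]) (k : ℕ) :
    iteratedDeriv k (fun z => p.eval z) = fun z => (derivative^[k] p).eval z := by
  induction k with
  | zero => rw [iteratedDeriv_zero, Function.iterate_zero_apply]
  | succ k ih =>
    rw [iteratedDeriv_succ, ih, Function.iterate_succ_apply']
    ext z
    exact (derivative^[k] p).deriv

lemma genLag_eq_eval_hankelPoly {m : ℤ} {n N : ℕ} (h : m + n = N) (μ z : ℝ) :
    genLag m n μ z = (hankelPoly (laguerrePoly N (μ + 1)) n).eval z := by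
  rw [genLag, h, lagL_natCast, hankelPoly, hankelDet, hankelMinor, ← coe_evalRingHom,
    RingHom.map_det]
  simp only [iteratedDeriv_eval]
  rfl

/-- The numerator of `w_{m,n}(z; μ)` as a formal polynomial. -/
def wNumerator (m n : ℕ) (μ : ℝ) : ℝ[X] :=
  hankelPoly (laguerrePoly (m + n - 1) (μ + 1)) n *
    hankelPoly (laguerrePoly (m + n) (μ + 1)) (n + 1)

/-- The denominator of `w_{m,n}(z; μ)` as a formal polynomial. -/
def wDenominator (m n : ℕ) (μ : ℝ) : ℝ[X] :=
  hankelPoly (laguerrePoly (m + n) (μ + 1)) n *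
    hankelPoly (laguerrePoly (m + n - 1) (μ + 1)) (n + 1)

lemma genLag_mul_genLag_eq_eval_wNumerator {m n : ℕ} (hm : 1 ≤ m) (μ z : ℝ) :
    genLag ((m : ℤ) - 1) n μ z * genLag ((m : ℤ) - 1) (n + 1) μ z =
      (wNumerator m n μ).eval z := by
  rw [wNumerator, eval_mul, genLag_eq_eval_hankelPoly (N := m + n - 1) (by omega),
    genLag_eq_eval_hankelPoly (N := m + n) (by omega)]

lemma genLag_mul_genLag_eq_eval_wDenominator {m n : ℕ} (hm : 1 ≤ m) (μ z : ℝ) :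
    genLag (m : ℤ) n μ z * genLag ((m : ℤ) - 2) (n + 1) μ z =
      (wDenominator m n μ).eval z := by
  rw [wDenominator, eval_mul, genLag_eq_eval_hankelPoly (N := m + n) (by omega),
    genLag_eq_eval_hankelPoly (N := m + n - 1) (by omega)]

theorem painleveFiveForm_wNumerator_wDenominator {m n : ℕ} (hm : 1 ≤ m) (μ : ℝ) :
    painleveFiveForm X (C (m : ℝ)) (C (-(m + 2 * n + 1 + μ))) (C μ) (wNumerator m n μ)
      (wDenominator m n μ) (X * quotientDeriv (wNumerator m n μ) (wDenominator m n μ))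
      (quotientEuler (wNumerator m n μ) (wDenominator m n μ)) = 0 := by
  obtain ⟨M, hM⟩ : ∃ M, m + n = M + 1 := ⟨m + n - 1, by omega⟩
  have hN : (M : ℝ) + 1 = m + n := mod_cast hM.symm
  have hform := painleveFiveForm_hankelPoly_ratio (n := n) (A := wNumerator m n μ)
    (B := wDenominator m n μ) (X_mul_derivative_laguerrePoly M (μ + 1))
    (X_mul_derivative_laguerrePoly_pred M (μ + 1)) (laguerrePoly_ne_zero _ _)
    (laguerrePoly_ne_zero _ _)
    (by rw [natDegree_laguerrePoly, natDegree_laguerrePoly]; exact M.succ_ne_self)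
    (by rw [natDegree_laguerrePoly]; omega) (by rw [natDegree_laguerrePoly]; omega)
    (by rw [wNumerator, hM, Nat.add_sub_cancel]) (by rw [wDenominator, hM, Nat.add_sub_cancel])
  rw [hN] at hform
  convert hform using 3 <;> ring

end Laguerre

/-- rational solutions of `P_V` in terms of `T̂_{m,n}^{(μ)}(z) = T_{m,n}^{(μ)}(-z)`. -/
theorem pv_rational_solution_hat (m n : ℕ) (hm : 1 ≤ m) (hn : 1 ≤ n) (μ : ℝ) (w wh : ℝ → ℝ)
    (hw : w = fun z =>
      genLag ((m : ℤ) - 1) n μ z * genLag ((m : ℤ) - 1) (n + 1) μ z /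
        (genLag (m : ℤ) n μ z * genLag ((m : ℤ) - 2) (n + 1) μ z))
    (hwh : wh = fun z =>
      genLag ((m : ℤ) - 1) n μ (-z) * genLag ((m : ℤ) - 1) (n + 1) μ (-z) /
        (genLag (m : ℤ) n μ (-z) * genLag ((m : ℤ) - 2) (n + 1) μ (-z))) :
    (∀ z : ℝ, z ≠ 0 →
        genLag (m : ℤ) n μ (-z) * genLag ((m : ℤ) - 2) (n + 1) μ (-z) ≠ 0 →
        wh z ≠ 0 → wh z ≠ 1 →
        PV ((m : ℝ) ^ 2 / 2) (-((m : ℝ) + 2 * n + 1 + μ) ^ 2 / 2) (-μ) wh z)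
      ∧ ∀ z : ℝ, wh z = w (-z) := by
  refine ⟨fun z hz hden h₀ h₁ => ?_, fun z => by rw [hw, hwh]⟩
  simp only [genLag_mul_genLag_eq_eval_wNumerator hm, genLag_mul_genLag_eq_eval_wDenominator hm]
    at hwh hden
  subst hwh
  rw [← neg_sq ((m : ℝ) + 2 * n + 1 + μ)]
  exact pv_eval_neg_div (painleveFiveForm_wNumerator_wDenominator hm μ) hz hden h₀ h₁
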